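/- Fix 0 < α ≤ 2 and t > 0, let g : (0,t) → ℂ be measurable with ∫_0^t |g(τ)|² τ^α dτ < ∞, and set F := L_t^α g. Then F satisfies the reproducing formula: for every w ∈ Δ_α, F(w) = ∫_{Δ_α} F(z) · (4 w · conj(z) / (α B(α/2, α/2))) · exp(-(α²/(4t)) (w^{2/α} + conj(z)^{2/α})) · (w^{2/α} + conj(z)^{2/α})^{-(α+1)} dμ_α^t(z), where the complex power of w^{2/α} + conj(z)^{2/α} (which has positive real part) is taken with the principal branch. -/

import Mathlib

open MeasureTheory Filter Set Complex

/-- The open sector `Δ_α = {z ≠ 0 : |arg z| < πα/4}`. -/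
def sector (α : ℝ) : Set ℂ :=
  {z : ℂ | z ≠ 0 ∧ |Complex.arg z| < Real.pi * α / 4}

/-- The complex kernel `K_α(z,s) = (α^α/(2^α Γ(α/2))) z s^{-(α/2+1)} exp(-α² z^{2/α}/(4s))`,
where `z^{2/α}` is taken with the principal branch. -/
noncomputable def Kc (α : ℝ) (z : ℂ) (s : ℝ) : ℂ :=
  ((α ^ α / (2 ^ α * Real.Gamma (α / 2)) : ℝ) : ℂ) * z * (((s ^ (-(α / 2 + 1)) : ℝ)) : ℂ) *
    Complex.exp (-(α ^ 2 : ℂ) * z ^ (((2 / α : ℝ)) : ℂ) / (4 * (s : ℂ)))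

/-- The transform `(L_t^α g)(z) = t^{-α} ∫_0^t K_α(z,t-τ) g(τ) τ^α dτ`. -/
noncomputable def Lc (α t : ℝ) (g : ℝ → ℂ) (z : ℂ) : ℂ :=
  ((t ^ (-α) : ℝ) : ℂ) *
    ∫ τ in Set.Ioo (0 : ℝ) t, Kc α z (t - τ) * g τ * ((τ ^ α : ℝ) : ℂ)

/-- The Beta function `B(a,b) = Γ(a)Γ(b)/Γ(a+b)`. -/
noncomputable def betaFn (a b : ℝ) : ℝ := Real.Gamma a * Real.Gamma b / Real.Gamma (a + b)

/-- The density of the measure `μ_α^t` with respect to the area measure on `Δ_α`. -/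
noncomputable def muDens (α t : ℝ) (z : ℂ) : ℝ :=
  (Real.pi)⁻¹ * 2 ^ (α - 1) * betaFn (α / 2) (α / 2) * ‖z‖ ^ (4 * (1 - α) / α) *
    Real.exp (α ^ 2 / (2 * t) * (z ^ (((2 / α : ℝ)) : ℂ)).re) *
      ((z ^ (((2 / α : ℝ)) : ℂ)).re) ^ (α - 1)



section Planch
open FourierTransform SchwartzMap

theorem fourier_toLp_ae (f : ℝ → ℂ) (hf : Integrable f) (hf2 : MemLp f 2) :
    ((𝓕 (hf2.toLp f) : Lp (α := ℝ) ℂ 2) : ℝ → ℂ) =ᵐ[volume] 𝓕 f := by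
  have hcont : Continuous (𝓕 f) := by
    apply VectorFourier.fourierIntegral_continuous Real.continuous_fourierChar ?_ hf
    exact continuous_inner
  apply ae_eq_of_integral_contDiff_smul_eq
  · exact (Lp.memLp _).locallyIntegrable (by norm_num)
  · exact hcont.locallyIntegrable
  intro g hg hgs
  let φ : 𝓢(ℝ, ℂ) := HasCompactSupport.toSchwartzMap (f := fun x => (g x : ℂ))
    (hgs.comp_left (g := fun x : ℝ => (x : ℂ)) (by simp)) (Complex.ofRealCLM.contDiff.comp hg)
  have hφ : ∀ x, φ x = (g x : ℂ) := fun x => rfl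
  have h1 := congrArg (fun T => T φ) (Lp.fourier_toTemperedDistribution_eq (hf2.toLp f))
  simp only [TemperedDistribution.fourier_apply, Lp.toTemperedDistribution_apply] at h1
  have h2 : ∫ x, (𝓕 φ) x • (hf2.toLp f) x = ∫ x, (𝓕 φ) x • f x := by
    apply integral_congr_ae
    filter_upwards [hf2.coeFn_toLp] with x hx
    rw [hx]
  have h3 : ∫ x, (𝓕 (φ : ℝ → ℂ)) x • f x = ∫ x, φ x • 𝓕 f x := by
    have := VectorFourier.integral_fourierIntegral_smul_eq_flip (L := innerₗ ℝ) (μ := volume)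
      (ν := volume) Real.continuous_fourierChar continuous_inner φ.integrable hf
    simpa using! this
  have h4 : ∫ x, (𝓕 φ) x • f x = ∫ x, φ x • 𝓕 f x := by
    rw [← h3]; rfl
  rw [← h2, h1] at h4
  simpa [hφ] using h4

theorem planch_inner (f g : ℝ → ℂ) (hf : Integrable f) (hf2 : MemLp f 2)
    (hg : Integrable g) (hg2 : MemLp g 2) :
    ∫ x, 𝓕 f x * (starRingEnd ℂ) (𝓕 g x) = ∫ x, f x * (starRingEnd ℂ) (g x) := by
  have h := Lp.inner_fourier_eq (hg2.toLp g) (hf2.toLp f)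
  rw [L2.inner_def, L2.inner_def] at h
  have e1 : ∫ x, inner ℂ ((𝓕 (hg2.toLp g) : Lp (α := ℝ) ℂ 2 volume) x)
     ((𝓕 (hf2.toLp f) : Lp (α := ℝ) ℂ 2 volume) x) = ∫ x, 𝓕 f x * (starRingEnd ℂ) (𝓕 g x) := by
    apply integral_congr_ae
    filter_upwards [fourier_toLp_ae f hf hf2, fourier_toLp_ae g hg hg2] with x hx hx'
    rw [hx, hx']; simp
  have e2 : ∫ x, inner ℂ ((hg2.toLp g) x) ((hf2.toLp f) x) = ∫ x, f x * (starRingEnd ℂ) (g x) := by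
    apply integral_congr_ae
    filter_upwards [hf2.coeFn_toLp, hg2.coeFn_toLp] with x hx hx'
    rw [hx, hx']; simp
  rw [← e1, ← e2, h]

theorem planch_memLp (f : ℝ → ℂ) (hf : Integrable f) (hf2 : MemLp f 2) :
    MemLp (𝓕 f) 2 :=
  (memLp_congr_ae (fourier_toLp_ae f hf hf2)).1 (Lp.memLp _)

/-- Unnormalised Fourier integral. -/
noncomputable def AF (f : ℝ → ℂ) (y : ℝ) : ℂ := ∫ l : ℝ, Complex.exp (-(I * y * l)) * f l

theorem AF_eq (f : ℝ → ℂ) (y : ℝ) : AF f (2 * Real.pi * y) = 𝓕 f y := by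
  rw [Real.fourier_real_eq_integral_exp_smul, AF]
  congr 1; ext l
  rw [smul_eq_mul]; congr 2; push_cast; ring

theorem AF_inner (f g : ℝ → ℂ) (hf : Integrable f) (hf2 : MemLp f 2)
    (hg : Integrable g) (hg2 : MemLp g 2) :
    ∫ y, AF f y * (starRingEnd ℂ) (AF g y) = 2 * Real.pi * ∫ x, f x * (starRingEnd ℂ) (g x) := by
  rw [← planch_inner f g hf hf2 hg hg2]
  simp_rw [← AF_eq]
  rw [Measure.integral_comp_mul_left (fun y => AF f y * (starRingEnd ℂ) (AF g y)),
    abs_of_pos (by positivity), Complex.real_smul, ← mul_assoc]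
  have : (Real.pi : ℂ) ≠ 0 := by exact_mod_cast Real.pi_ne_zero
  push_cast; field_simp

theorem AF_sq_integrable (f : ℝ → ℂ) (hf : Integrable f) (hf2 : MemLp f 2) :
    Integrable (fun y => ‖AF f y‖ ^ 2) := by
  have h := (memLp_two_iff_integrable_sq_norm (planch_memLp f hf hf2).1).1 (planch_memLp f hf hf2)
  simp_rw [← AF_eq] at h
  exact (integrable_comp_mul_left_iff (fun y => ‖AF f y‖ ^ 2) (by positivity)).1 h

theorem AF_sq (f : ℝ → ℂ) (hf : Integrable f) (hf2 : MemLp f 2) :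
    ∫ y, ‖AF f y‖ ^ 2 = 2 * Real.pi * ∫ x, ‖f x‖ ^ 2 := by
  have h := AF_inner f f hf hf2 hf hf2
  simp_rw [Complex.mul_conj, Complex.normSq_eq_norm_sq] at h
  rw [integral_complex_ofReal, integral_complex_ofReal] at h
  exact_mod_cast h

theorem AF_cont (f : ℝ → ℂ) (hf : Integrable f) : Continuous (AF f) := by
  have hcont : Continuous (𝓕 f) := by
    apply VectorFourier.fourierIntegral_continuous Real.continuous_fourierChar ?_ hf
    exact continuous_inner
  have : AF f = fun y => 𝓕 f ((2 * Real.pi)⁻¹ * y) := by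
    ext y; rw [← AF_eq]; congr 1; field_simp
  rw [this]; fun_prop
end Planch

theorem rpow_exp_int {s b : ℝ} (hs : -1 < s) (hb : 0 < b) :
    IntegrableOn (fun x : ℝ => x ^ s * Real.exp (-(b * x))) (Ioi 0) := by
  have := integrableOn_rpow_mul_exp_neg_mul_rpow hs one_pos hb
  simpa using this

theorem gamma_laplace (a : ℝ) (ha : 0 < a) (c : ℂ) (hc : 0 < c.re) :
    ∫ l in Ioi (0:ℝ), ((l ^ a : ℝ) : ℂ) * Complex.exp (-(c * l)) =
      (Real.Gamma (a + 1) : ℂ) * c ^ ((-(a + 1) : ℝ) : ℂ) := by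
  let μ : Measure ℝ := (volume.restrict (Ioi 0)).withDensity (fun l => ENNReal.ofReal (l ^ a))
  have hmeas : Measurable (fun l : ℝ => Real.toNNReal (l ^ a)) := by fun_prop
  have hμ : ∀ z : ℂ, ProbabilityTheory.complexMGF id μ z =
      ∫ l in Ioi (0:ℝ), ((l ^ a : ℝ) : ℂ) * Complex.exp (z * l) := by
    intro z
    rw [ProbabilityTheory.complexMGF]
    have := integral_withDensity_eq_integral_smul (μ := volume.restrict (Ioi (0:ℝ))) hmeas
      (fun l : ℝ => Complex.exp (z * l))
    refine this.trans ?_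
    apply setIntegral_congr_fun measurableSet_Ioi
    intro l hl
    simp only [NNReal.smul_def]
    rw [Real.coe_toNNReal _ (Real.rpow_nonneg (le_of_lt hl) _), Complex.real_smul]
  have hset : Iio (0:ℝ) ⊆ interior (ProbabilityTheory.integrableExpSet id μ) := by
    apply interior_maximal _ isOpen_Iio
    intro s hs
    change Integrable _ _
    have := (integrable_withDensity_iff_integrable_smul (μ := volume.restrict (Ioi (0:ℝ))) hmeas
      (g := fun l : ℝ => Real.exp (s * l))).2 ?_
    · exact this
    have h0 := rpow_exp_int (s := a) (b := -s) (by linarith) (by simpa using hs)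
    refine h0.congr_fun ?_ measurableSet_Ioi
    intro l hl
    simp only [NNReal.smul_def]
    rw [Real.coe_toNNReal _ (Real.rpow_nonneg (le_of_lt hl) _), smul_eq_mul]
    congr 2; ring
  let U : Set ℂ := {z | z.re < 0}
  have hUo : IsOpen U := isOpen_lt Complex.continuous_re continuous_const
  have h1 : AnalyticOnNhd ℂ (ProbabilityTheory.complexMGF id μ) U := by
    intro z hz
    exact ProbabilityTheory.analyticOnNhd_complexMGF z (hset hz)
  have h2 : AnalyticOnNhd ℂ
      (fun z : ℂ => (Real.Gamma (a + 1) : ℂ) * (-z) ^ ((-(a + 1) : ℝ) : ℂ)) U := by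
    apply DifferentiableOn.analyticOnNhd _ hUo
    intro z hz
    apply DifferentiableAt.differentiableWithinAt
    apply DifferentiableAt.const_mul
    apply DifferentiableAt.cpow (by fun_prop) (by fun_prop)
    left
    simpa [U] using hz
  have hUc : IsPreconnected U := (convex_halfSpace_re_lt 0).isPreconnected
  have key := h1.eqOn_of_preconnected_of_frequently_eq h2 hUc (z₀ := -1) (by simp [U]) ?_
  · have := key (x := -c) (by simpa [U] using hc)
    rw [hμ] at this
    simpa using this
  have hreal : ∀ x : ℝ, 0 < x → ProbabilityTheory.complexMGF id μ (-x) =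
      (Real.Gamma (a + 1) : ℂ) * (-(-x : ℂ)) ^ ((-(a + 1) : ℝ) : ℂ) := by
    intro x hx
    rw [hμ]
    have := Real.integral_rpow_mul_exp_neg_mul_Ioi (a := a + 1) (r := x) (by linarith) hx
    rw [neg_neg, ← Complex.ofReal_cpow hx.le, ← Complex.ofReal_mul, Real.rpow_neg hx.le,
      mul_comm, ← Real.inv_rpow hx.le, ← one_div, ← this, ← integral_complex_ofReal]
    congr 1; ext l; push_cast; congr 2; ring_nf
    ring_nf
  have ht : Tendsto (fun n : ℕ => (-((1 + 1 / ((n:ℝ) + 1) : ℝ)) : ℂ)) atTop (nhdsWithin (-1) {-1}ᶜ) := by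
    apply tendsto_nhdsWithin_of_tendsto_nhds_of_eventually_within
    · have h := (tendsto_one_div_add_atTop_nhds_zero_nat (𝕜 := ℝ)).const_add 1
      have h' := (Complex.continuous_ofReal.tendsto _).comp h
      simpa using h'.neg
    · refine Eventually.of_forall fun n => ?_
      simp only [mem_compl_iff, mem_singleton_iff, neg_inj]
      norm_cast
      have : (0:ℝ) < 1 / ((n:ℝ) + 1) := by positivity
      intro h; push_cast at h; linarith
  apply ht.frequently
  refine Frequently.of_forall fun n => ?_
  exact hreal _ (by positivity)

/-- Half-line Lebesgue measure. -/
noncomputable def hν : Measure ℝ := volume.restrict (Ioi (0:ℝ))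

noncomputable instance : SFinite hν := by unfold hν; infer_instance

/-- Laplace transform. -/
noncomputable def Lapl (h : ℝ → ℂ) (ζ : ℂ) : ℂ := ∫ l : ℝ, Complex.exp (-(ζ * l)) * h l ∂hν

noncomputable def fx (h : ℝ → ℂ) (x : ℝ) : ℝ → ℂ :=
  indicator (Ioi 0) (fun l : ℝ => (Real.exp (-(x * l)) : ℂ) * h l)

theorem Lapl_eq (h : ℝ → ℂ) (x y : ℝ) : Lapl h (x + y * I) = AF (fx h x) y := by
  unfold Lapl AF fx hν
  rw [← integral_indicator measurableSet_Ioi]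
  congr 1; ext l
  by_cases hl : l ∈ Ioi (0:ℝ)
  · rw [indicator_of_mem hl, indicator_of_mem hl, Complex.ofReal_exp, ← mul_assoc,
      ← Complex.exp_add]
    congr 2; push_cast; ring
  · rw [indicator_of_notMem hl, indicator_of_notMem hl, mul_zero]

theorem ae_pos : ∀ᵐ x ∂hν, 0 < x := ae_restrict_mem measurableSet_Ioi

theorem rpow_exp_bound {a x l : ℝ} (ha : 0 < a) (hx : 0 < x) (hl : 0 < l) :
    Real.exp (-(x * l)) ≤ (a / x) ^ a * l ^ (-a) := by
  have h1 : x * l / a ≤ Real.exp (x * l / a) := by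
    linarith [Real.add_one_le_exp (x * l / a)]
  have h2 := Real.rpow_le_rpow (by positivity) h1 ha.le
  rw [← Real.exp_mul, div_mul_cancel₀ _ ha.ne'] at h2
  have h3 : (a / x) ^ a * l ^ (-a) = ((x * l / a) ^ a)⁻¹ := by
    rw [← Real.inv_rpow (by positivity), Real.rpow_neg hl.le, ← Real.inv_rpow hl.le,
      ← Real.mul_rpow (by positivity) (by positivity)]
    congr 1; field_simp
  rw [h3, Real.exp_neg]
  gcongr

section core
variable {α : ℝ} {h k : ℝ → ℂ}

theorem fx_meas (hm : Measurable h) (x : ℝ) : Measurable (fx h x) := by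
  unfold fx
  exact Measurable.indicator (by fun_prop) measurableSet_Ioi

theorem fx_int (hα : 0 < α) (hm : Measurable h)
    (hh : Integrable (fun l => ‖h l‖ ^ 2 * l ^ (-α)) hν) {x : ℝ} (hx : 0 < x) :
    Integrable (fx h x) := by
  unfold fx
  rw [integrable_indicator_iff measurableSet_Ioi]
  have h0 : IntegrableOn (fun l : ℝ => ‖h l‖ ^ 2 * l ^ (-α) + l ^ α * Real.exp (-((2 * x) * l)))
    (Ioi 0) := Integrable.add hh (rpow_exp_int (by linarith) (by positivity))
  refine h0.mono' (by fun_prop) ?_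
  filter_upwards [ae_restrict_mem measurableSet_Ioi] with l hl
  have hl : 0 < l := hl
  rw [norm_mul, Complex.norm_real, Real.norm_of_nonneg (Real.exp_nonneg _)]
  have e1 : l ^ (-α) * l ^ α = 1 := by rw [← Real.rpow_add hl]; simp
  have e2 : Real.exp (-((2 * x) * l)) = Real.exp (-(x * l)) ^ 2 := by
    rw [← Real.exp_nat_mul]; congr 1; push_cast; ring
  rw [e2]
  have p1 : 0 < l ^ (-α) := Real.rpow_pos_of_pos hl _
  have p2 : 0 < l ^ α := Real.rpow_pos_of_pos hl _
  have p3 := Real.exp_pos (-(x * l))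
  have p4 := norm_nonneg (h l)
  set A := ‖h l‖
  set E := Real.exp (-(x * l))
  set P := l ^ α
  have e3 : l ^ (-α) = P⁻¹ := Real.rpow_neg hl.le _
  rw [e3]
  have : A ^ 2 * P⁻¹ + P * E ^ 2 - E * A = P⁻¹ * ((A - P * E / 2) ^ 2 + 3 / 4 * (P * E) ^ 2) := by
    field_simp; ring
  have : 0 ≤ A ^ 2 * P⁻¹ + P * E ^ 2 - E * A := by rw [this]; positivity
  linarith

theorem fx_normsq (x : ℝ) : (fun l => ‖fx h x l‖ ^ 2) =
    indicator (Ioi 0) (fun l : ℝ => Real.exp (-((2 * x) * l)) * ‖h l‖ ^ 2) := by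
  ext l
  unfold fx
  by_cases hl : l ∈ Ioi (0:ℝ)
  · rw [indicator_of_mem hl, indicator_of_mem hl, norm_mul, mul_pow, Complex.norm_real,
      Real.norm_of_nonneg (Real.exp_nonneg _), ← Real.exp_nat_mul]
    congr 2; push_cast; ring
  · rw [indicator_of_notMem hl, indicator_of_notMem hl]; simp

theorem fx_mem (hα : 0 < α) (hm : Measurable h)
    (hh : Integrable (fun l => ‖h l‖ ^ 2 * l ^ (-α)) hν) {x : ℝ} (hx : 0 < x) :
    MemLp (fx h x) 2 := by
  rw [memLp_two_iff_integrable_sq_norm (fx_meas hm x).aestronglyMeasurable, fx_normsq,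
    integrable_indicator_iff measurableSet_Ioi]
  refine (Integrable.const_mul hh ((α / (2 * x)) ^ α)).mono' (by fun_prop) ?_
  filter_upwards [ae_restrict_mem measurableSet_Ioi] with l hl
  have hl : 0 < l := hl
  rw [Real.norm_of_nonneg (by positivity)]
  have := rpow_exp_bound hα (show 0 < 2 * x by positivity) hl
  calc _ ≤ ((α / (2 * x)) ^ α * l ^ (-α)) * ‖h l‖ ^ 2 := by gcongr
    _ = _ := by ring

theorem int_x (hα : 0 < α) {l : ℝ} (hl : 0 < l) :
    ∫ x, x ^ (α - 1) * Real.exp (-((2 * x) * l)) ∂hν = 2 ^ (-α) * Real.Gamma α * l ^ (-α) := by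
  have := Real.integral_rpow_mul_exp_neg_mul_Ioi hα (show 0 < 2 * l by positivity)
  unfold hν
  rw [show 2 ^ (-α) * Real.Gamma α * l ^ (-α) = (1 / (2 * l)) ^ α * Real.Gamma α by
    rw [one_div, Real.inv_rpow (by positivity), Real.mul_rpow (by positivity) hl.le, mul_inv,
      ← Real.rpow_neg (by positivity), ← Real.rpow_neg hl.le]; ring, ← this]
  congr 1; ext x; congr 3; ring

theorem JJ (hα : 0 < α) (hm : Measurable h)
    (hh : Integrable (fun l => ‖h l‖ ^ 2 * l ^ (-α)) hν) :
    Integrable (fun p : ℝ × ℝ => p.1 ^ (α - 1) * Real.exp (-((2 * p.1) * p.2)) * ‖h p.2‖ ^ 2)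
      (hν.prod hν) := by
  rw [integrable_prod_iff' (by fun_prop)]
  constructor
  · filter_upwards [ae_pos] with l hl
    apply Integrable.mul_const
    have := rpow_exp_int (s := α - 1) (b := 2 * l) (by linarith) (by positivity)
    refine this.congr (Eventually.of_forall fun x => ?_)
    simp only; congr 2; ring
  · refine (Integrable.const_mul hh (2 ^ (-α) * Real.Gamma α)).congr ?_
    filter_upwards [ae_pos] with l hl
    have : ∀ᵐ x ∂hν, ‖x ^ (α - 1) * Real.exp (-((2 * x) * l)) * ‖h l‖ ^ 2‖ =
        x ^ (α - 1) * Real.exp (-((2 * x) * l)) * ‖h l‖ ^ 2 := by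
      filter_upwards [ae_pos] with x hx
      rw [Real.norm_of_nonneg (by positivity)]
    rw [integral_congr_ae this, integral_mul_const, int_x hα hl]
    ring

theorem Lapl_meas (hm : Measurable h) : StronglyMeasurable (Lapl h) := by
  unfold Lapl
  apply MeasureTheory.StronglyMeasurable.integral_prod_right'
    (f := fun p : ℂ × ℝ => Complex.exp (-(p.1 * p.2)) * h p.2)
  apply Measurable.stronglyMeasurable
  fun_prop

theorem Lapl_meas2 (hm : Measurable h) : Measurable (fun p : ℝ × ℝ => Lapl h (p.1 + p.2 * I)) :=
  (Lapl_meas hm).measurable.comp (by fun_prop)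

theorem SqInt (hα : 0 < α) (hm : Measurable h)
    (hh : Integrable (fun l => ‖h l‖ ^ 2 * l ^ (-α)) hν) :
    Integrable (fun p : ℝ × ℝ => p.1 ^ (α - 1) * ‖Lapl h (p.1 + p.2 * I)‖ ^ 2)
      (hν.prod volume) := by
  have hms := Lapl_meas2 hm
  rw [integrable_prod_iff (by fun_prop)]
  constructor
  · filter_upwards [ae_pos] with x hx
    apply Integrable.const_mul
    simp_rw [Lapl_eq]
    exact AF_sq_integrable _ (fx_int hα hm hh hx) (fx_mem hα hm hh hx)
  · refine (Integrable.const_mul (JJ hα hm hh).integral_prod_left (2 * Real.pi)).congr ?_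
    filter_upwards [ae_pos] with x hx
    have : ∀ y : ℝ, ‖x ^ (α - 1) * ‖Lapl h (x + y * I)‖ ^ 2‖ = x ^ (α - 1) * ‖AF (fx h x) y‖ ^ 2 := by
      intro y; rw [Real.norm_of_nonneg (by positivity), Lapl_eq]
    simp_rw [this]
    rw [integral_const_mul, AF_sq _ (fx_int hα hm hh hx) (fx_mem hα hm hh hx), fx_normsq,
      integral_indicator measurableSet_Ioi]
    simp_rw [mul_assoc]
    rw [integral_const_mul]
    unfold hν
    ring

theorem cross_bound (a b : ℂ) : ‖a * (starRingEnd ℂ) b‖ ≤ ‖a‖ ^ 2 + ‖b‖ ^ 2 := by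
  rw [norm_mul, RCLike.norm_conj]
  nlinarith [sq_nonneg (‖a‖ - ‖b‖), sq_nonneg ‖a‖, sq_nonneg ‖b‖]

theorem CrossInt (hα : 0 < α) (hm : Measurable h)
    (hh : Integrable (fun l => ‖h l‖ ^ 2 * l ^ (-α)) hν) (km : Measurable k)
    (kk : Integrable (fun l => ‖k l‖ ^ 2 * l ^ (-α)) hν) :
    Integrable (fun p : ℝ × ℝ => ((p.1 ^ (α - 1) : ℝ) : ℂ) *
      (Lapl h (p.1 + p.2 * I) * (starRingEnd ℂ) (Lapl k (p.1 + p.2 * I)))) (hν.prod volume) := by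
  have hms := Lapl_meas2 hm
  have kms := Lapl_meas2 km
  refine ((SqInt hα hm hh).add (SqInt hα km kk)).mono' ?_ ?_
  · apply Measurable.aestronglyMeasurable
    exact Measurable.mul (by fun_prop) (hms.mul (Complex.continuous_conj.measurable.comp kms))
  have : ∀ᵐ p ∂(hν.prod (volume : Measure ℝ)), 0 < p.1 :=
    Measure.quasiMeasurePreserving_fst.ae ae_pos
  filter_upwards [this] with p hp
  rw [norm_mul, Complex.norm_real, Real.norm_of_nonneg (by positivity)]
  simp only [Pi.add_apply]
  rw [← mul_add]
  gcongr
  exact cross_bound _ _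

theorem CrossEq (hα : 0 < α) (hm : Measurable h)
    (hh : Integrable (fun l => ‖h l‖ ^ 2 * l ^ (-α)) hν) (km : Measurable k)
    (kk : Integrable (fun l => ‖k l‖ ^ 2 * l ^ (-α)) hν) :
    ∫ p : ℝ × ℝ, ((p.1 ^ (α - 1) : ℝ) : ℂ) *
      (Lapl h (p.1 + p.2 * I) * (starRingEnd ℂ) (Lapl k (p.1 + p.2 * I))) ∂(hν.prod volume) =
    2 * Real.pi * (2 ^ (-α) * Real.Gamma α : ℝ) *
      ∫ l, h l * (starRingEnd ℂ) (k l) * ((l ^ (-α) : ℝ) : ℂ) ∂hν := by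
  rw [integral_prod _ (CrossInt hα hm hh km kk)]
  have e1 : ∀ᵐ x ∂hν, ∫ y : ℝ, ((x ^ (α - 1) : ℝ) : ℂ) *
      (Lapl h (x + y * I) * (starRingEnd ℂ) (Lapl k (x + y * I))) =
      2 * Real.pi * ∫ l, ((x ^ (α - 1) * Real.exp (-((2 * x) * l)) : ℝ) : ℂ) *
        (h l * (starRingEnd ℂ) (k l)) ∂hν := by
    filter_upwards [ae_pos] with x hx
    rw [integral_const_mul]
    simp_rw [Lapl_eq]
    rw [AF_inner _ _ (fx_int hα hm hh hx) (fx_mem hα hm hh hx) (fx_int hα km kk hx)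
      (fx_mem hα km kk hx)]
    have : ∀ l, fx h x l * (starRingEnd ℂ) (fx k x l) = indicator (Ioi 0) (fun l : ℝ =>
        ((Real.exp (-((2 * x) * l)) : ℝ) : ℂ) * (h l * (starRingEnd ℂ) (k l))) l := by
      intro l
      unfold fx
      by_cases hl : l ∈ Ioi (0:ℝ)
      · rw [indicator_of_mem hl, indicator_of_mem hl, indicator_of_mem hl,
          show -((2 * x) * l) = -(x * l) + -(x * l) by ring, Real.exp_add, map_mul,
          Complex.conj_ofReal]
        push_cast; ring
      · rw [indicator_of_notMem hl, indicator_of_notMem hl, indicator_of_notMem hl]; simp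
    simp_rw [this]
    rw [integral_indicator measurableSet_Ioi]
    simp_rw [Complex.ofReal_mul, mul_assoc]
    rw [integral_const_mul]
    unfold hν
    push_cast
    ring
  rw [integral_congr_ae e1, integral_const_mul, integral_integral_swap]
  · rw [mul_assoc (2 * (Real.pi : ℂ))]
    congr 1
    rw [← integral_const_mul]
    apply integral_congr_ae
    filter_upwards [ae_pos] with l hl
    rw [integral_mul_const, integral_complex_ofReal, int_x hα hl]
    push_cast; ring
  · refine ((JJ hα hm hh).add (JJ hα km kk)).mono' ?_ ?_
    · apply Measurable.aestronglyMeasurable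
      exact Measurable.mul (by fun_prop) (Measurable.mul (by fun_prop)
        (Complex.continuous_conj.measurable.comp (by fun_prop)))
    have : ∀ᵐ p ∂(hν.prod hν), 0 < p.1 :=
      Measure.quasiMeasurePreserving_fst.ae ae_pos
    filter_upwards [this] with p hp
    simp only [Function.uncurry]
    rw [norm_mul, Complex.norm_real, Real.norm_of_nonneg (by positivity)]
    simp only [Pi.add_apply]
    rw [← mul_add]
    gcongr
    exact cross_bound _ _

/-- The reproducing formula on the right half plane. -/
theorem core (hα : 0 < α) (hm : Measurable h)
    (hh : Integrable (fun l => ‖h l‖ ^ 2 * l ^ (-α)) hν) (w : ℂ) (hw : 0 < w.re) :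
    ∫ z in {z : ℂ | 0 < z.re}, ((z.re ^ (α - 1) : ℝ) : ℂ) *
      (Lapl h z * (w + (starRingEnd ℂ) z) ^ ((-(α + 1) : ℝ) : ℂ)) =
    ((Real.pi * 2 ^ (1 - α) / α : ℝ) : ℂ) * Lapl h w := by
  let k : ℝ → ℂ := fun l => ((l ^ α : ℝ) : ℂ) * Complex.exp (-((starRingEnd ℂ) w * l))
  have km : Measurable k := by fun_prop
  have hexp : ∀ (c : ℂ) (l : ℝ), ‖Complex.exp (-(c * l))‖ = Real.exp (-(c.re * l)) := by
    intro c l; rw [Complex.norm_exp]; simp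
  have kk : Integrable (fun l => ‖k l‖ ^ 2 * l ^ (-α)) hν := by
    refine Integrable.congr (rpow_exp_int (s := α) (b := 2 * w.re) (by linarith) (by positivity)) ?_
    filter_upwards [ae_pos] with l hl
    simp only [k]
    rw [norm_mul, hexp, Complex.norm_real, Real.norm_of_nonneg (by positivity), mul_pow,
      ← Real.exp_nat_mul]
    rw [Real.rpow_neg hl.le]
    have : l ^ α ≠ 0 := (Real.rpow_pos_of_pos hl _).ne'
    rw [Complex.conj_re]
    field_simp
    congr 1; push_cast; ring
  have hGk : ∀ z : ℂ, 0 < z.re → (starRingEnd ℂ) (Lapl k z) =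
      (Real.Gamma (α + 1) : ℂ) * (w + (starRingEnd ℂ) z) ^ ((-(α + 1) : ℝ) : ℂ) := by
    intro z hz
    have hre : 0 < (w + (starRingEnd ℂ) z).re := by simp; linarith
    rw [← gamma_laplace α hα _ hre]
    unfold Lapl hν
    rw [← integral_conj]
    congr 1; ext l
    simp only [k, map_mul, ← Complex.exp_conj, map_neg, Complex.conj_ofReal, Complex.conj_conj]
    rw [mul_left_comm, ← Complex.exp_add]
    congr 2; ring
  have hG : (Real.Gamma (α + 1) : ℂ) ≠ 0 := by
    exact_mod_cast (Real.Gamma_pos_of_pos (by linarith)).ne'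
  have hlast : ∫ l, h l * (starRingEnd ℂ) (k l) * ((l ^ (-α) : ℝ) : ℂ) ∂hν = Lapl h w := by
    unfold Lapl
    apply integral_congr_ae
    filter_upwards [ae_pos] with l hl
    simp only [k, map_mul, ← Complex.exp_conj, map_neg, Complex.conj_ofReal, Complex.conj_conj]
    have : ((l ^ α : ℝ) : ℂ) * ((l ^ (-α) : ℝ) : ℂ) = 1 := by
      rw [← Complex.ofReal_mul, ← Real.rpow_add hl]; simp
    linear_combination (h l * Complex.exp (-(w * l))) * this
  have hC := CrossEq hα hm hh km kk
  rw [hlast] at hC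
  have hvol : hν.prod (volume : Measure ℝ) = (volume : Measure (ℝ × ℝ)).restrict (Ioi 0 ×ˢ univ) := by
    unfold hν
    rw [Measure.volume_eq_prod, ← Measure.prod_restrict, Measure.restrict_univ]
  rw [hvol] at hC
  have hmp := Complex.volume_preserving_equiv_real_prod
  have hpre : {z : ℂ | 0 < z.re} = Complex.measurableEquivRealProd ⁻¹' (Ioi 0 ×ˢ univ) := by
    ext z; simp
  have := hmp.setIntegral_preimage_emb Complex.measurableEquivRealProd.measurableEmbedding
    (fun p : ℝ × ℝ => ((p.1 ^ (α - 1) : ℝ) : ℂ) *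
      (Lapl h (p.1 + p.2 * I) * (starRingEnd ℂ) (Lapl k (p.1 + p.2 * I)))) (Ioi 0 ×ˢ univ)
  rw [hC, ← hpre] at this
  simp only [Complex.measurableEquivRealProd_apply, Complex.re_add_im] at this
  have e2 : ∫ z in {z : ℂ | 0 < z.re}, ((z.re ^ (α - 1) : ℝ) : ℂ) *
      (Lapl h z * (starRingEnd ℂ) (Lapl k z)) = (Real.Gamma (α + 1) : ℂ) *
      ∫ z in {z : ℂ | 0 < z.re}, ((z.re ^ (α - 1) : ℝ) : ℂ) *
      (Lapl h z * (w + (starRingEnd ℂ) z) ^ ((-(α + 1) : ℝ) : ℂ)) := by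
    rw [← integral_const_mul]
    apply setIntegral_congr_fun (measurableSet_lt measurable_const Complex.measurable_re)
    intro z hz
    simp only
    rw [hGk z hz]; ring
  rw [e2] at this
  apply mul_left_cancel₀ hG
  rw [this, Real.Gamma_add_one hα.ne', Real.rpow_sub (by norm_num), Real.rpow_neg (by norm_num)]
  have hα' : (α : ℂ) ≠ 0 := by exact_mod_cast hα.ne'
  simp only [Real.rpow_one]
  push_cast
  field_simp
end core

theorem det_smul_one (c : ℂ) : |(c • (1 : ℂ →L[ℝ] ℂ)).det| = ‖c‖ ^ 2 := by
  have h1 : (c • (1 : ℂ →L[ℝ] ℂ)).det = Algebra.norm ℝ c := by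
    rw [Algebra.norm_apply]
    rfl
  rw [h1, Algebra.norm_complex_apply, Complex.normSq_eq_norm_sq, abs_of_nonneg (by positivity)]

section sect
variable {α : ℝ}

theorem halfplane_arg {ζ : ℂ} (h : 0 < ζ.re) : |ζ.arg| < Real.pi / 2 :=
  Complex.abs_arg_lt_pi_div_two_iff.2 (Or.inl h)

theorem cpow_back1 (hα : 0 < α) (hα2 : α ≤ 2) {ζ : ℂ} (h : 0 < ζ.re) :
    (ζ ^ ((α / 2 : ℝ) : ℂ)) ^ ((2 / α : ℝ) : ℂ) = ζ := by
  have ha := abs_lt.1 (halfplane_arg h)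
  have him : (Complex.log ζ * ((α / 2 : ℝ) : ℂ)).im = ζ.arg * (α / 2) := by
    rw [Complex.im_mul_ofReal, Complex.log_im]
  have hpi := Real.pi_pos
  rw [← Complex.cpow_mul]
  · rw [← Complex.ofReal_mul, show α / 2 * (2 / α) = 1 by field_simp]; simp
  · rw [him]; nlinarith
  · rw [him]; nlinarith

theorem sector_re (hα : 0 < α) {z : ℂ} (h : z ∈ sector α) :
    0 < (z ^ ((2 / α : ℝ) : ℂ)).re := by
  obtain ⟨h0, h1⟩ := h
  have ha := abs_lt.1 h1
  rw [Complex.cpow_def_of_ne_zero h0, Complex.exp_re, Complex.im_mul_ofReal, Complex.log_im]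
  apply mul_pos (Real.exp_pos _)
  have e : Real.pi / 2 = (Real.pi * α / 4) * (2 / α) := by field_simp; norm_num
  have h2 : 0 < 2 / α := by positivity
  apply Real.cos_pos_of_mem_Ioo
  constructor
  · rw [e]; nlinarith
  · rw [e]; nlinarith

theorem cpow_back2 (hα : 0 < α) {z : ℂ} (h : z ∈ sector α) :
    (z ^ ((2 / α : ℝ) : ℂ)) ^ ((α / 2 : ℝ) : ℂ) = z := by
  obtain ⟨h0, h1⟩ := h
  have ha := abs_lt.1 h1
  have him : (Complex.log z * ((2 / α : ℝ) : ℂ)).im = z.arg * (2 / α) := by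
    rw [Complex.im_mul_ofReal, Complex.log_im]
  have e : Real.pi / 2 = (Real.pi * α / 4) * (2 / α) := by field_simp; norm_num
  have h2 : 0 < 2 / α := by positivity
  have hpi := Real.pi_pos
  rw [← Complex.cpow_mul]
  · rw [← Complex.ofReal_mul, show 2 / α * (α / 2) = 1 by field_simp]; simp
  · rw [him]; nlinarith
  · rw [him]; nlinarith

theorem sector_image (hα : 0 < α) (hα2 : α ≤ 2) :
    (fun ζ : ℂ => ζ ^ ((α / 2 : ℝ) : ℂ)) '' {ζ : ℂ | 0 < ζ.re} = sector α := by
  ext z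
  constructor
  · rintro ⟨ζ, hζ, rfl⟩
    have hζ : 0 < ζ.re := hζ
    have h0 : ζ ≠ 0 := by rintro rfl; simp at hζ
    have ha := abs_lt.1 (halfplane_arg hζ)
    have hpi := Real.pi_pos
    have him : (Complex.log ζ * ((α / 2 : ℝ) : ℂ)).im = ζ.arg * (α / 2) := by
      rw [Complex.im_mul_ofReal, Complex.log_im]
    refine ⟨by simp [h0], ?_⟩
    simp only
    rw [← Complex.log_im, Complex.cpow_def_of_ne_zero h0, Complex.log_exp, him, abs_mul,
      abs_of_pos (by positivity : 0 < α / 2)]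
    · nlinarith [halfplane_arg hζ]
    · rw [him]; nlinarith
    · rw [him]; nlinarith
  · intro hz
    exact ⟨z ^ ((2 / α : ℝ) : ℂ), sector_re hα hz, cpow_back2 hα hz⟩

theorem sector_integral (hα : 0 < α) (hα2 : α ≤ 2) (Φ : ℂ → ℂ) :
    ∫ z in sector α, Φ z = ∫ ζ in {ζ : ℂ | 0 < ζ.re},
      ((α ^ 2 / 4 * ‖ζ‖ ^ (α - 2) : ℝ) : ℂ) * Φ (ζ ^ ((α / 2 : ℝ) : ℂ)) := by
  have hms : MeasurableSet {ζ : ℂ | 0 < ζ.re} := measurableSet_lt measurable_const Complex.measurable_re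
  rw [← sector_image hα hα2]
  rw [integral_image_eq_integral_abs_det_fderiv_smul volume hms
    (f' := fun ζ : ℂ => (((α / 2 : ℝ) : ℂ) * ζ ^ (((α / 2 : ℝ) : ℂ) - 1)) • (1 : ℂ →L[ℝ] ℂ))]
  · apply setIntegral_congr_fun hms
    intro ζ hζ
    have hζ : 0 < ζ.re := hζ
    have h0 : ζ ≠ 0 := by rintro rfl; simp at hζ
    have hn : 0 < ‖ζ‖ := norm_pos_iff.2 h0
    simp only
    rw [det_smul_one, Complex.real_smul]
    congr 2
    rw [norm_mul, mul_pow, Complex.norm_real, Real.norm_of_nonneg (by positivity),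
      show ((α / 2 : ℝ) : ℂ) - 1 = ((α / 2 - 1 : ℝ) : ℂ) by push_cast; ring,
      Complex.norm_cpow_real, ← Real.rpow_natCast, ← Real.rpow_natCast, ← Real.rpow_mul hn.le]
    congr 1
    · rw [Real.rpow_natCast]; ring
    · congr 1; push_cast; ring
  · intro ζ hζ
    have hζ : 0 < ζ.re := hζ
    have hd : HasDerivAt (fun ζ : ℂ => ζ ^ ((α / 2 : ℝ) : ℂ))
        (((α / 2 : ℝ) : ℂ) * ζ ^ (((α / 2 : ℝ) : ℂ) - 1)) ζ := by
      have := (hasDerivAt_id ζ).cpow_const (c := ((α / 2 : ℝ) : ℂ)) (Or.inl hζ)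
      simpa using this
    exact hd.complexToReal_fderiv.hasFDerivWithinAt
  · intro a ha b hb hab
    simp only at hab
    rw [← cpow_back1 hα hα2 ha, hab, cpow_back1 hα hα2 hb]
end sect

section subst
variable {α t : ℝ}

/-- The substitution `τ = t - q/(l+β)`. -/
noncomputable def tauf (α t l : ℝ) : ℝ := t - (α ^ 2 / 4) / (l + α ^ 2 / (4 * t))

noncomputable def dtau (α t l : ℝ) : ℝ := (α ^ 2 / 4) / (l + α ^ 2 / (4 * t)) ^ 2

/-- The function of which `L g` is the Laplace transform. -/
noncomputable def hfun (α t : ℝ) (g : ℝ → ℂ) (l : ℝ) : ℂ :=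
  ((t ^ (-α) * (α ^ α / (2 ^ α * Real.Gamma (α / 2))) * (t - tauf α t l) ^ (-(α / 2 + 1)) *
    (tauf α t l) ^ α * dtau α t l : ℝ) : ℂ) * g (tauf α t l)

theorem tauf_meas : Measurable (tauf α t) := by unfold tauf; fun_prop
theorem dtau_meas : Measurable (dtau α t) := by unfold dtau; fun_prop
theorem hfun_meas {g : ℝ → ℂ} (hg : Measurable g) : Measurable (hfun α t g) := by
  have := tauf_meas (α := α) (t := t)
  have := dtau_meas (α := α) (t := t)
  unfold hfun
  fun_prop

theorem tauf_deriv (hα : 0 < α) (ht : 0 < t) {l : ℝ} (hl : 0 < l) :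
    HasDerivAt (tauf α t) (dtau α t l) l := by
  unfold tauf dtau
  have hpos : 0 < l + α ^ 2 / (4 * t) := by positivity
  have h1 : HasDerivAt (fun l : ℝ => l + α ^ 2 / (4 * t)) 1 l := (hasDerivAt_id l).add_const _
  have h2 := (((hasDerivAt_const l (α ^ 2 / 4)).div h1 hpos.ne')).const_sub t
  have e : α ^ 2 / 4 / (l + α ^ 2 / (4 * t)) ^ 2 =
      -((0 * (l + α ^ 2 / (4 * t)) - α ^ 2 / 4 * 1) / (l + α ^ 2 / (4 * t)) ^ 2) := by ring
  rw [e]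
  exact h2

theorem tauf_eq (hα : 0 < α) (ht : 0 < t) {l : ℝ} (hl : 0 < l) :
    tauf α t l = t * l / (l + α ^ 2 / (4 * t)) := by
  unfold tauf
  have hpos : 0 < l + α ^ 2 / (4 * t) := by positivity
  field_simp
  ring

theorem tauf_inj (hα : 0 < α) (ht : 0 < t) : InjOn (tauf α t) (Ioi 0) := by
  intro a ha b hb hab
  have ha : 0 < a := ha
  have hb : 0 < b := hb
  have p1 : 0 < a + α ^ 2 / (4 * t) := by positivity
  have p2 : 0 < b + α ^ 2 / (4 * t) := by positivity
  unfold tauf at hab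
  have h3 : (α ^ 2 / 4) / (a + α ^ 2 / (4 * t)) = (α ^ 2 / 4) / (b + α ^ 2 / (4 * t)) := by linarith
  have hq : α ^ 2 / 4 ≠ 0 := by positivity
  rw [div_eq_div_iff p1.ne' p2.ne'] at h3
  have := mul_left_cancel₀ hq h3
  linarith

theorem tauf_image (hα : 0 < α) (ht : 0 < t) : tauf α t '' Ioi 0 = Ioo 0 t := by
  ext s
  constructor
  · rintro ⟨l, hl, rfl⟩
    have hl : 0 < l := hl
    have p1 : 0 < l + α ^ 2 / (4 * t) := by positivity
    refine ⟨by rw [tauf_eq hα ht hl]; positivity, ?_⟩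
    unfold tauf
    have : 0 < (α ^ 2 / 4) / (l + α ^ 2 / (4 * t)) := by positivity
    linarith
  · rintro ⟨h0, h1⟩
    have h2 : 0 < t - s := by linarith
    refine ⟨(α ^ 2 / 4) / (t - s) - α ^ 2 / (4 * t), ?_, ?_⟩
    · have : (α ^ 2 / 4) / (t - s) - α ^ 2 / (4 * t) = (α ^ 2 / 4) * s / ((t - s) * t) := by
        field_simp; ring
      rw [mem_Ioi, this]; positivity
    · unfold tauf
      rw [sub_add_cancel]
      field_simp; ring

theorem dtau_nonneg (l : ℝ) : 0 ≤ dtau α t l := by unfold dtau; positivity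

theorem hfun_int (hα : 0 < α) (ht : 0 < t) {g : ℝ → ℂ}
    (hint : IntegrableOn (fun τ => ‖g τ‖ ^ 2 * τ ^ α) (Set.Ioo 0 t)) :
    Integrable (fun l => ‖hfun α t g l‖ ^ 2 * l ^ (-α)) hν := by
  rw [← tauf_image hα ht, integrableOn_image_iff_integrableOn_abs_deriv_smul measurableSet_Ioi
    (fun l hl => (tauf_deriv hα ht hl).hasDerivWithinAt) (tauf_inj hα ht)] at hint
  set c0 := α ^ α / (2 ^ α * Real.Gamma (α / 2)) with hc0
  have hΓ : 0 < Real.Gamma (α / 2) := Real.Gamma_pos_of_pos (by positivity)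
  have hc0p : 0 < c0 := by positivity
  refine (Integrable.const_mul hint (t ^ (-α) * c0 ^ 2 * (α ^ 2 / 4) ^ (-α - 1))).congr ?_
  filter_upwards [ae_pos] with l hl
  have p1 : 0 < l + α ^ 2 / (4 * t) := by positivity
  have hτ : 0 < tauf α t l := by rw [tauf_eq hα ht hl]; positivity
  rw [abs_of_nonneg (dtau_nonneg l), smul_eq_mul]
  unfold hfun
  rw [← hc0]
  have hs : t - tauf α t l = (α ^ 2 / 4) / (l + α ^ 2 / (4 * t)) := by unfold tauf; ring
  have hl' : l = tauf α t l * (l + α ^ 2 / (4 * t)) / t := by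
    rw [tauf_eq hα ht hl]; field_simp
  have hd : dtau α t l = (α ^ 2 / 4) / (l + α ^ 2 / (4 * t)) ^ 2 := rfl
  have hq : 0 < α ^ 2 / 4 := by positivity
  rw [hs, hd]
  have hlp : l ^ (-α) = (tauf α t l) ^ (-α) * (l + α ^ 2 / (4 * t)) ^ (-α) * t ^ α := by
    conv_lhs => rw [hl']
    rw [Real.div_rpow (by positivity) ht.le, Real.mul_rpow hτ.le p1.le, div_eq_mul_inv,
      ← Real.rpow_neg ht.le, neg_neg]
  rw [hlp]
  generalize α ^ 2 / 4 = q at *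
  generalize l + α ^ 2 / (4 * t) = m at *
  generalize tauf α t l = T at *
  rw [norm_mul, Complex.norm_real, Real.norm_of_nonneg (by positivity)]
  rw [show -(α / 2 + 1) = -(α / 2) + -1 by ring, Real.rpow_add (by positivity),
    Real.div_rpow hq.le p1.le, Real.rpow_sub_one hq.ne', Real.rpow_neg_one]
  have e1 : ∀ x : ℝ, 0 < x → x ^ α = (x ^ (α / 2)) ^ 2 := by
    intro x hx; rw [← Real.rpow_natCast, ← Real.rpow_mul hx.le]; congr 1; push_cast; ring
  rw [Real.rpow_neg hq.le, Real.rpow_neg p1.le, Real.rpow_neg hq.le, Real.rpow_neg ht.le,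
    Real.rpow_neg p1.le, Real.rpow_neg hτ.le,
    e1 q hq, e1 m p1, e1 t ht]
  have n1 := (Real.rpow_pos_of_pos hq (α / 2)).ne'
  have n2 := (Real.rpow_pos_of_pos p1 (α / 2)).ne'
  have n3 := (Real.rpow_pos_of_pos ht (α / 2)).ne'
  have n4 := (Real.rpow_pos_of_pos hτ α).ne'
  field_simp

theorem Lc_eq (hα : 0 < α) (ht : 0 < t) (g : ℝ → ℂ) (z : ℂ) :
    Lc α t g z = z * Complex.exp (-(((α ^ 2 / (4 * t) : ℝ) : ℂ) * z ^ (((2 / α : ℝ)) : ℂ))) *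
      Lapl (hfun α t g) (z ^ (((2 / α : ℝ)) : ℂ)) := by
  unfold Lc
  rw [← tauf_image hα ht, integral_image_eq_integral_abs_deriv_smul measurableSet_Ioi
    (fun l hl => (tauf_deriv hα ht hl).hasDerivWithinAt) (tauf_inj hα ht)]
  unfold Lapl hν
  rw [← integral_const_mul, ← integral_const_mul]
  apply setIntegral_congr_fun measurableSet_Ioi
  intro l hl
  have hl : 0 < l := hl
  have p1 : 0 < l + α ^ 2 / (4 * t) := by positivity
  simp only
  rw [abs_of_nonneg (dtau_nonneg l), Complex.real_smul]
  unfold Kc hfun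
  have hs : t - tauf α t l = (α ^ 2 / 4) / (l + α ^ 2 / (4 * t)) := by unfold tauf; ring
  have e : -(α ^ 2 : ℂ) * z ^ (((2 / α : ℝ)) : ℂ) / (4 * ((t - tauf α t l : ℝ) : ℂ)) =
      -(((α ^ 2 / (4 * t) : ℝ) : ℂ) * z ^ (((2 / α : ℝ)) : ℂ)) +
        -(z ^ (((2 / α : ℝ)) : ℂ) * l) := by
    have e1 : (α ^ 2 : ℂ) / (4 * ((t - tauf α t l : ℝ) : ℂ)) =
        ((l + α ^ 2 / (4 * t) : ℝ) : ℂ) := by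
      rw [hs, show ((α : ℂ) ^ 2) = ((α ^ 2 : ℝ) : ℂ) by push_cast; ring,
        show (4 : ℂ) = ((4 : ℝ) : ℂ) by norm_num, ← Complex.ofReal_mul, ← Complex.ofReal_div]
      congr 1
      field_simp
    rw [neg_mul, neg_div, mul_div_right_comm, e1]
    push_cast; ring
  rw [e, Complex.exp_add]
  push_cast
  ring
end subst

theorem stmt16 (α t : ℝ) (hα : 0 < α) (hα2 : α ≤ 2) (ht : 0 < t)
    (g : ℝ → ℂ) (hg : Measurable g)
    (hint : IntegrableOn (fun τ => ‖g τ‖ ^ 2 * τ ^ α) (Set.Ioo 0 t))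
    (w : ℂ) (hw : w ∈ sector α) :
    Lc α t g w =
      ∫ z in sector α,
        Lc α t g z *
          (4 * w * (starRingEnd ℂ) z / ((α : ℂ) * ((betaFn (α / 2) (α / 2) : ℝ) : ℂ))) *
          Complex.exp (-((α ^ 2 : ℂ) / (4 * (t : ℂ))) *
            (w ^ (((2 / α : ℝ)) : ℂ) + (starRingEnd ℂ) (z ^ (((2 / α : ℝ)) : ℂ)))) *
          (w ^ (((2 / α : ℝ)) : ℂ) + (starRingEnd ℂ) (z ^ (((2 / α : ℝ)) : ℂ))) ^
            ((-(α + 1) : ℝ) : ℂ) *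
          ((muDens α t z : ℝ) : ℂ) := by
  have hW := sector_re hα hw
  rw [sector_integral hα hα2]
  have hms : MeasurableSet {ζ : ℂ | 0 < ζ.re} := measurableSet_lt measurable_const Complex.measurable_re
  have hcore := core hα (hfun_meas (α := α) (t := t) hg) (hfun_int hα ht hint) _ hW
  rw [Lc_eq hα ht g w]
  set W := w ^ (((2 / α : ℝ)) : ℂ) with hWdef
  have hα' : (α : ℂ) ≠ 0 := by exact_mod_cast hα.ne'
  have hpi : (Real.pi : ℂ) ≠ 0 := by exact_mod_cast Real.pi_ne_zero
  have h2 : (((2:ℝ) ^ (α - 1) : ℝ) : ℂ) * (((2:ℝ) ^ (1 - α) : ℝ) : ℂ) = 1 := by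
    rw [← Complex.ofReal_mul, ← Real.rpow_add (by norm_num)]; simp
  have hB : ((betaFn (α / 2) (α / 2) : ℝ) : ℂ) ≠ 0 := by
    have h1 : 0 < Real.Gamma (α / 2) := Real.Gamma_pos_of_pos (by positivity)
    have h2 : 0 < Real.Gamma (α / 2 + α / 2) := Real.Gamma_pos_of_pos (by positivity)
    have : 0 < betaFn (α / 2) (α / 2) := by unfold betaFn; positivity
    exact_mod_cast this.ne'
  have key : ∀ ζ ∈ {ζ : ℂ | 0 < ζ.re},
      ((α ^ 2 / 4 * ‖ζ‖ ^ (α - 2) : ℝ) : ℂ) * (Lc α t g (ζ ^ ((α / 2 : ℝ) : ℂ)) *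
          (4 * w * (starRingEnd ℂ) (ζ ^ ((α / 2 : ℝ) : ℂ)) / ((α : ℂ) * ((betaFn (α / 2) (α / 2) : ℝ) : ℂ))) *
          Complex.exp (-((α ^ 2 : ℂ) / (4 * (t : ℂ))) *
            (W + (starRingEnd ℂ) ((ζ ^ ((α / 2 : ℝ) : ℂ)) ^ (((2 / α : ℝ)) : ℂ)))) *
          (W + (starRingEnd ℂ) ((ζ ^ ((α / 2 : ℝ) : ℂ)) ^ (((2 / α : ℝ)) : ℂ))) ^
            ((-(α + 1) : ℝ) : ℂ) *
          ((muDens α t (ζ ^ ((α / 2 : ℝ) : ℂ)) : ℝ) : ℂ)) =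
      (w * Complex.exp (-(((α ^ 2 / (4 * t) : ℝ) : ℂ) * W)) * (α * ((2:ℝ) ^ (α - 1) : ℝ) / Real.pi)) *
       (((ζ.re ^ (α - 1) : ℝ) : ℂ) *
      (Lapl (hfun α t g) ζ * (W + (starRingEnd ℂ) ζ) ^ ((-(α + 1) : ℝ) : ℂ))) := by
    intro ζ hζ
    have hζ : 0 < ζ.re := hζ
    have h0 : ζ ≠ 0 := by rintro rfl; simp at hζ
    have hn : 0 < ‖ζ‖ := norm_pos_iff.2 h0
    rw [Lc_eq hα ht]
    unfold muDens
    rw [cpow_back1 hα hα2 hζ]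
    have hz : ‖ζ ^ ((α / 2 : ℝ) : ℂ)‖ = ‖ζ‖ ^ (α / 2) := Complex.norm_cpow_real _ _
    rw [hz]
    have hzz := Complex.mul_conj' (ζ ^ ((α / 2 : ℝ) : ℂ))
    rw [hz] at hzz
    have hnorm : (((‖ζ‖ ^ (α / 2) : ℝ) : ℂ)) ^ 2 * (((‖ζ‖ ^ (α / 2)) ^ (4 * (1 - α) / α) : ℝ) : ℂ) *
        ((‖ζ‖ ^ (α - 2) : ℝ) : ℂ) = 1 := by
      rw [← Complex.ofReal_pow, ← Complex.ofReal_mul, ← Complex.ofReal_mul, ← Real.rpow_natCast,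
        ← Real.rpow_mul hn.le, ← Real.rpow_mul hn.le, ← Real.rpow_add hn, ← Real.rpow_add hn]
      rw [show α / 2 * ((2:ℕ):ℝ) + α / 2 * (4 * (1 - α) / α) + (α - 2) = 0 by
        push_cast; field_simp; ring]
      simp
    have hexp : Complex.exp (-(((α ^ 2 / (4 * t) : ℝ) : ℂ) * ζ)) *
        Complex.exp (-((α ^ 2 : ℂ) / (4 * (t : ℂ))) * (W + (starRingEnd ℂ) ζ)) *
        ((Real.exp (α ^ 2 / (2 * t) * ζ.re) : ℝ) : ℂ) =
        Complex.exp (-(((α ^ 2 / (4 * t) : ℝ) : ℂ) * W)) := by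
      rw [Complex.ofReal_exp, ← Complex.exp_add, ← Complex.exp_add]
      congr 1
      have ht' : (t : ℂ) ≠ 0 := by exact_mod_cast ht.ne'
      have := Complex.add_conj ζ
      push_cast
      push_cast at this
      linear_combination (-(α:ℂ) ^ 2 / (4 * t)) * this
    set z := ζ ^ ((α / 2 : ℝ) : ℂ)
    set Z := (W + (starRingEnd ℂ) ζ) ^ ((-(α + 1) : ℝ) : ℂ)
    rw [← hexp]
    generalize Complex.exp (-(((α ^ 2 / (4 * t) : ℝ) : ℂ) * ζ)) = E1
    generalize Complex.exp (-((α ^ 2 : ℂ) / (4 * (t : ℂ))) * (W + (starRingEnd ℂ) ζ)) = E2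
    simp only [Complex.ofReal_mul, Complex.ofReal_inv]
    generalize ((Real.exp (α ^ 2 / (2 * t) * ζ.re) : ℝ) : ℂ) = E3
    generalize (((‖ζ‖ ^ (α / 2)) ^ (4 * (1 - α) / α) : ℝ) : ℂ) = N2 at *
    generalize (((‖ζ‖ ^ (α / 2) : ℝ) : ℂ)) = N1 at *
    generalize ((‖ζ‖ ^ (α - 2) : ℝ) : ℂ) = N3 at *
    rw [← hzz] at hnorm
    generalize (starRingEnd ℂ) z = zb at *
    generalize ((betaFn (α / 2) (α / 2) : ℝ) : ℂ) = B at *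
    generalize Lapl (hfun α t g) ζ = L
    generalize ((ζ.re ^ (α - 1) : ℝ) : ℂ) = R
    generalize (((2:ℝ) ^ (α - 1) : ℝ) : ℂ) = D at *
    push_cast
    field_simp
    linear_combination (E1 * E2 * E3 * L * R * w * D * Z) * hnorm
  rw [setIntegral_congr_fun hms key, integral_const_mul, hcore]
  push_cast
  have : ∀ A D1 D2 L : ℂ, D1 * D2 = 1 → A * L = A * (α * D1 / Real.pi) * (Real.pi * D2 / α * L) := by
    intro A D1 D2 L h
    field_simp
    linear_combination (-A * L) * h
  exact this _ _ _ _ h2
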